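/- arXiv:math/0407326 — 11 statements merged into one kernel-verified Lean document; each statement's English description precedes it below -/
import Mathlib

section
/- For every integer d ≥ 1, the odd double factorials satisfy 2 · (2d−1)!! = ∑_{k=1}^{d} binomial(d+1, k) · (2k−3)!! · (2d−2k−1)!!, where each factor (2m−1)!! denotes the product (2m−1)(2m−3)···3·1 (with the empty product, for m ≤ 0, equal to 1). Equivalently, (2d)!! = (1/2) ∑_{k=1}^{d} binomial(d+1,k) (2k−2)!! (2d−2k)!! in the paper's notation (2d)!! = (2d−1)(2d−3)···3·1. -/
open Nat in
theorem aux_dfac (i : ℕ) : (2 * i - 1)‼ * 2 ^ i = catalan i * (i + 1)! := by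
  have h : (2 * i - 1)‼ * 2 ^ i = Nat.centralBinom i * i ! := by
    induction i with
    | zero => simp
    | succ n ih =>
      have h1 : (2 * (n + 1) - 1)‼ = (2 * n + 1) * (2 * n - 1)‼ := by
        rcases n with _ | n
        · simp
        · have e1 : 2 * (n + 1 + 1) - 1 = (2 * n + 1) + 2 := by omega
          have e2 : 2 * (n + 1) - 1 = 2 * n + 1 := by omega
          rw [e1, e2, Nat.doubleFactorial_add_two]; ring
      have h2 := Nat.succ_mul_centralBinom_succ n
      rw [h1, Nat.factorial_succ, pow_succ]
      calc _ = 2 * (2 * n + 1) * ((2 * n - 1)‼ * 2 ^ n) := by ring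
        _ = (2 * (2 * n + 1) * Nat.centralBinom n) * n ! := by rw [ih]; ring
        _ = _ := by rw [← h2]; ring
  rw [h, ← succ_mul_catalan_eq_centralBinom, Nat.factorial_succ]
  ring

open Nat in
/-- For `d ≥ 1`:  `2 ⬝ (2d-1)!! = ∑_{k=1}^d C(d+1, k) (2k-3)!! (2d-2k-1)!!`,
where `(2m-1)!!` is the product of the odd numbers `(2m-1)(2m-3)⋯3⋅1`
(equal to `1` for `m ≤ 0`, via truncated subtraction). -/
theorem doubleFactorial_identity (d : ℕ) (hd : 1 ≤ d) :
    2 * (2 * d - 1)‼ =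
      ∑ k ∈ Finset.Icc 1 d, (d + 1).choose k * (2 * k - 3)‼ * (2 * d - 2 * k - 1)‼ := by
  obtain ⟨m, rfl⟩ : ∃ m, d = m + 1 := ⟨d - 1, by omega⟩
  apply Nat.eq_of_mul_eq_mul_right (pow_pos (two_pos : 0 < 2) m)
  have hL : 2 * (2 * (m + 1) - 1)‼ * 2 ^ m = catalan (m + 1) * (m + 1 + 1)! := by
    rw [← aux_dfac, pow_succ]; ring
  rw [hL, catalan_succ, Fin.sum_univ_eq_sum_range (fun i => catalan i * catalan (m - i)) (m + 1),
    Finset.sum_mul, Finset.sum_mul, ← Finset.Ico_add_one_right_eq_Icc, Finset.sum_Ico_eq_sum_range]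
  apply Finset.sum_congr (by simp)
  intro i hi
  obtain ⟨j, rfl⟩ : ∃ j, m = i + j := ⟨m - i, by simp at hi; omega⟩
  have e1 : 2 * (1 + i) - 3 = 2 * i - 1 := by omega
  have e2 : 2 * (i + j + 1) - 2 * (1 + i) - 1 = 2 * j - 1 := by omega
  have e3 : i + j - i = j := by omega
  have hc := Nat.add_choose_mul_factorial_mul_factorial (i + 1) (j + 1)
  rw [Nat.choose_symm_add.symm] at hc
  have e4 : i + j + 1 + 1 = (i + 1) + (j + 1) := by omega
  rw [e1, e2, e3, e4, ← hc, add_comm 1 i, pow_add]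
  calc _ = (i + 1 + (j + 1)).choose (i + 1) * (catalan i * (i + 1)!) * (catalan j * (j + 1)!) := by
        ring
    _ = _ := by rw [← aux_dfac, ← aux_dfac]; ring
end

section
/- The Motzkin number M_n is even if and only if there exists m ∈ C with n = 4m − 2 or n = 4m − 1. -/
/-- The Motzkin numbers `M n = ∑_k C(n, 2k) ⬝ Catalan k`. -/
def motzkin (n : ℕ) : ℕ := ∑ k ∈ Finset.range (n + 1), n.choose (2 * k) * catalan k

/-- The set `C = {1, 3, 4, 5, 7, 9, 11, 12, …}` of block lengths of the Thue–Morse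
sequence: a positive integer `m` belongs to `C` iff it is not the case that `m` is
even with `m / 2 ∈ C`;  `0 ∉ C`. -/
def inC (m : ℕ) : Bool :=
  if h : m = 0 then false
  else if m % 2 = 0 then !(inC (m / 2)) else true
decreasing_by exact Nat.div_lt_self (Nat.pos_of_ne_zero h) one_lt_two

/-- auxiliary sum modulo two -/
def auxS (K N : ℕ) : ZMod 2 := ∑ k ∈ Finset.range K, (N.choose k : ZMod 2) * (catalan k : ZMod 2)

theorem zmod2_sq (x : ZMod 2) : x * x = x := by revert x; decide

theorem zmod2_add_self (x : ZMod 2) : x + x = 0 := by revert x; decide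

theorem cat_odd (k : ℕ) : (catalan (2 * k + 1) : ZMod 2) = catalan k := by
  rw [catalan_succ']
  push_cast
  have hmem : (k, k) ∈ Finset.HasAntidiagonal.antidiagonal (2 * k) := by
    rw [Finset.HasAntidiagonal.mem_antidiagonal]; omega
  rw [← Finset.add_sum_erase _ _ hmem, zmod2_sq]
  rw [Finset.sum_involution (fun p _ => p.swap), add_zero]
  · rintro ⟨i, j⟩ _
    simp only [Prod.swap_prod_mk, Prod.fst_swap, Prod.snd_swap]
    rw [mul_comm (catalan j : ZMod 2), zmod2_add_self]
  · rintro ⟨i, j⟩ h _ h2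
    simp only [Finset.mem_erase, Finset.HasAntidiagonal.mem_antidiagonal, Prod.swap_prod_mk, Prod.mk.injEq,
      ne_eq] at h h2
    omega
  · rintro ⟨i, j⟩ h
    simp only [Finset.mem_erase, Finset.HasAntidiagonal.mem_antidiagonal, Prod.swap_prod_mk, Prod.mk.injEq,
      ne_eq] at h ⊢
    omega
  · rintro ⟨i, j⟩ _
    rfl

theorem cat_even (k : ℕ) : (catalan (2 * k + 2) : ZMod 2) = 0 := by
  rw [catalan_succ']
  push_cast
  rw [Finset.sum_involution (fun p _ => p.swap)]
  · rintro ⟨i, j⟩ _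
    simp only [Prod.swap_prod_mk, Prod.fst_swap, Prod.snd_swap]
    rw [mul_comm (catalan j : ZMod 2), zmod2_add_self]
  · rintro ⟨i, j⟩ h _ h2
    simp only [Finset.HasAntidiagonal.mem_antidiagonal, Prod.swap_prod_mk, Prod.mk.injEq] at h h2
    omega
  · rintro ⟨i, j⟩ h
    simp only [Finset.HasAntidiagonal.mem_antidiagonal, Prod.swap_prod_mk] at h ⊢
    omega
  · rintro ⟨i, j⟩ _
    rfl

theorem choose_two (n k : ℕ) : (n.choose k : ZMod 2) =
    ((n % 2).choose (k % 2) : ZMod 2) * ((n / 2).choose (k / 2) : ZMod 2) := by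
  have : Fact (Nat.Prime 2) := ⟨Nat.prime_two⟩
  have h := Choose.choose_modEq_choose_mod_mul_choose_div_nat (n := n) (k := k) (p := 2)
  have h2 := (ZMod.natCast_eq_natCast_iff _ _ _).2 h
  rw [h2]; push_cast; rfl

theorem auxS_ext (N K : ℕ) (h : N + 1 ≤ K) : auxS K N = auxS (N + 1) N := by
  unfold auxS
  symm
  apply Finset.sum_subset
  · intro x hx
    simp only [Finset.mem_range] at *
    omega
  · intro x _ hx
    simp only [Finset.mem_range] at hx
    rw [Nat.choose_eq_zero_of_lt (by omega)]
    simp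

theorem sum_split (f : ℕ → ZMod 2) (K : ℕ) :
    ∑ i ∈ Finset.range (2 * K + 1), f i =
      f 0 + ∑ i ∈ Finset.range K, (f (2 * i + 1) + f (2 * i + 2)) := by
  induction K with
  | zero => simp
  | succ K ih =>
    rw [show 2 * (K + 1) + 1 = (2 * K + 1) + 1 + 1 by ring, Finset.sum_range_succ,
      Finset.sum_range_succ, ih, Finset.sum_range_succ]
    ring

theorem auxS_rec (N : ℕ) : auxS (N + 1) N =
    1 + ((N % 2 : ℕ) : ZMod 2) * auxS (N / 2 + 1) (N / 2) := by
  rw [← auxS_ext N (2 * (N + 1) + 1) (by omega), ← auxS_ext (N / 2) (N + 1) (by omega)]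
  unfold auxS
  rw [sum_split, Finset.mul_sum]
  congr 1
  · simp
  · apply Finset.sum_congr rfl
    intro i _
    rw [cat_even, cat_odd, choose_two, show (2 * i + 1) % 2 = 1 by omega,
      show (2 * i + 1) / 2 = i by omega, Nat.choose_one_right]
    ring

theorem auxS_inC (N : ℕ) : auxS (N + 1) N = if inC (N + 1) then 1 else 0 := by
  induction N using Nat.strong_induction_on with
  | _ N ih =>
    rw [auxS_rec, inC]
    rcases Nat.mod_two_eq_zero_or_one N with h | h
    · have h1 : ¬ (N + 1) % 2 = 0 := by omega
      simp [h, h1]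
    · have h1 : (N + 1) % 2 = 0 := by omega
      rw [ih (N / 2) (by omega), show (N + 1) / 2 = N / 2 + 1 by omega]
      cases hc : inC (N / 2 + 1) <;> simp [h, h1, zmod2_add_self]

theorem motzkin_cast (n : ℕ) : (motzkin n : ZMod 2) = auxS (n / 2 + 1) (n / 2) := by
  rw [← auxS_ext (n / 2) (n + 1) (by omega)]
  unfold motzkin auxS
  push_cast
  apply Finset.sum_congr rfl
  intro k _
  rw [choose_two n, show 2 * k % 2 = 0 by omega, show 2 * k / 2 = k by omega]
  simp

/-- The Motzkin number `M n` is even iff `n = 4m - 2` or `n = 4m - 1` for some `m ∈ C`. -/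
theorem motzkin_even_iff (n : ℕ) :
    Even (motzkin n) ↔ ∃ m : ℕ, inC m ∧ (n = 4 * m - 2 ∨ n = 4 * m - 1) := by
  rw [← ZMod.natCast_eq_zero_iff_even, motzkin_cast, auxS_inC, inC]
  constructor
  · intro h
    by_cases h1 : (n / 2 + 1) % 2 = 0
    · refine ⟨(n / 2 + 1) / 2, ?_, by omega⟩
      by_contra hc
      simp [h1, hc] at h
    · simp [h1] at h
  · rintro ⟨m, hm, h⟩
    have hm0 : m ≠ 0 := by
      rintro rfl
      simp [inC] at hm
    have h1 : (n / 2 + 1) % 2 = 0 := by omega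
    have h2 : (n / 2 + 1) / 2 = m := by omega
    simp [h1, h2, hm]
end

section
/- The Motzkin prefix number P_n is even if and only if there exists m ∈ C with n = 2m − 1. -/
/-- `motzkinPrefix n` is the number of sequences `(s 0, …, s (n-1))` with entries in
`{-1, 0, 1}` (encoded as `Fin 3`, via `i ↦ (i : ℤ) - 1`) all of whose partial sums
are nonnegative, i.e. the number of Motzkin prefixes of length `n`. -/
def motzkinPrefix (n : ℕ) : ℕ :=
  ((Finset.univ : Finset (Fin n → Fin 3)).filter fun s =>
    ∀ j : Fin n, 0 ≤ ∑ i ∈ Finset.univ.filter (· ≤ j), ((s i : ℤ) - 1)).card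

/-- Heights extended to all of `ℤ`, modulo 2, by reflection about `-1`. -/
def reflA : ℕ → ℤ → ZMod 2
  | 0, h => if h = -1 then 0 else 1
  | n + 1, h => reflA n (h - 1) + reflA n h + reflA n (h + 1)

theorem reflA_two (n : ℕ) (h : ℤ) :
    reflA (n + 2) h = reflA n (h - 2) + reflA n h + reflA n (h + 2) := by
  have e1 : h - 1 - 1 = h - 2 := by ring
  have e2 : h + 1 + 1 = h + 2 := by ring
  simp only [reflA, e1, e2, sub_add_cancel, add_sub_cancel_right]
  generalize reflA n (h - 2) = a
  generalize reflA n (h - 1) = b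
  generalize reflA n h = c
  generalize reflA n (h + 1) = d
  generalize reflA n (h + 2) = e
  revert a b c d e
  decide

theorem reflA_symm (n : ℕ) : ∀ h : ℤ, reflA n (-2 - h) = reflA n h := by
  induction n with
  | zero =>
    intro h
    simp only [reflA]
    have : (-2 - h = -1) ↔ h = -1 := by omega
    simp [this]
  | succ n ih =>
    intro h
    have e1 : -2 - h - 1 = -2 - (h + 1) := by ring
    have e2 : -2 - h + 1 = -2 - (h - 1) := by ring
    simp only [reflA]
    rw [e1, e2, ih, ih, ih]
    ring

theorem reflA_neg_one (n : ℕ) : reflA n (-1) = 0 := by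
  induction n with
  | zero => simp [reflA]
  | succ n ih =>
    have h := reflA_symm n 0
    simp only [reflA, ih]
    norm_num at h ⊢
    rw [h, zmod2_add_self]

theorem reflA_even_even (k : ℕ) : ∀ j : ℤ, reflA (2 * k) (2 * j) = 1 := by
  induction k with
  | zero =>
    intro j
    have : ¬ (2 * j = -1) := by omega
    simp [reflA, this]
  | succ k ih =>
    intro j
    have e1 : 2 * j - 2 = 2 * (j - 1) := by ring
    have e2 : 2 * j + 2 = 2 * (j + 1) := by ring
    rw [show 2 * (k + 1) = 2 * k + 2 by ring, reflA_two, e1, e2, ih, ih, ih]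
    decide

theorem reflA_even_odd (k : ℕ) : ∀ j : ℤ, reflA (2 * k) (2 * j + 1) = reflA k j := by
  induction k with
  | zero =>
    intro j
    have : (2 * j + 1 = -1) ↔ j = -1 := by omega
    simp [reflA, this]
  | succ k ih =>
    intro j
    have e1 : 2 * j + 1 - 2 = 2 * (j - 1) + 1 := by ring
    have e2 : 2 * j + 1 + 2 = 2 * (j + 1) + 1 := by ring
    rw [show 2 * (k + 1) = 2 * k + 2 by ring, reflA_two, e1, e2, ih, ih, ih]
    rfl

theorem reflA_odd_zero (k : ℕ) : reflA (2 * k + 1) 0 = 1 + reflA k 0 := by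
  have h1 := reflA_even_even k 0
  have h2 := reflA_even_odd k 0
  have h3 := reflA_neg_one (2 * k)
  simp only [mul_zero, zero_add] at h1 h2
  simp only [reflA, zero_sub, zero_add, h1, h2, h3]

/-- Number (mod 2) of continuations from height `h`. -/
def walkW (n : ℕ) (h : ℤ) : ZMod 2 :=
  ∑ s : Fin n → Fin 3,
    if ∀ j : Fin n, 0 ≤ h + ∑ i ∈ Finset.univ.filter (· ≤ j), ((s i : ℤ) - 1) then 1 else 0

theorem walk_cond (n : ℕ) (h : ℤ) (a : Fin 3) (s : Fin n → Fin 3) (hh : 0 ≤ h + ((a : ℤ) - 1)) :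
    (∀ j : Fin (n + 1), 0 ≤ h + ∑ i ∈ Finset.univ.filter (· ≤ j),
      (((Fin.cons a s : Fin (n + 1) → Fin 3) i : ℤ) - 1)) ↔
    ∀ j : Fin n, 0 ≤ (h + ((a : ℤ) - 1)) +
      ∑ i ∈ Finset.univ.filter (· ≤ j), ((s i : ℤ) - 1) := by
  rw [Fin.forall_fin_succ]
  simp only [Finset.sum_filter, Fin.sum_univ_succ, Fin.cons_zero, Fin.cons_succ,
    Fin.succ_le_succ_iff, Fin.zero_le, if_true, ← add_assoc]
  constructor
  · intro H j
    have := H.2 j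
    linarith
  · intro H
    refine ⟨?_, fun j => ?_⟩
    · simp
      linarith
    · have := H j
      linarith

theorem walk_cond_neg (n : ℕ) (h : ℤ) (a : Fin 3) (s : Fin n → Fin 3)
    (hh : ¬ 0 ≤ h + ((a : ℤ) - 1)) :
    ¬ (∀ j : Fin (n + 1), 0 ≤ h + ∑ i ∈ Finset.univ.filter (· ≤ j),
      (((Fin.cons a s : Fin (n + 1) → Fin 3) i : ℤ) - 1)) := by
  intro H
  apply hh
  have := H 0
  simp only [Finset.sum_filter, Fin.sum_univ_succ, Fin.cons_zero, Fin.cons_succ] at this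
  simpa using this

theorem walkW_succ (n : ℕ) (h : ℤ) :
    walkW (n + 1) h = ∑ a : Fin 3, if 0 ≤ h + ((a : ℤ) - 1) then walkW n (h + ((a : ℤ) - 1)) else 0 := by
  rw [walkW, ← (Fin.consEquiv (fun _ : Fin (n + 1) => Fin 3)).sum_comp, Fintype.sum_prod_type]
  refine Finset.sum_congr rfl fun a _ => ?_
  split_ifs with hh
  · rw [walkW]
    refine Finset.sum_congr rfl fun s _ => ?_
    exact if_congr (walk_cond n h a s hh) rfl rfl
  · refine Finset.sum_eq_zero fun s _ => ?_
    exact if_neg (walk_cond_neg n h a s hh)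

theorem walkW_eq (n : ℕ) : ∀ h : ℤ, 0 ≤ h → walkW n h = reflA n h := by
  induction n with
  | zero =>
    intro h hh
    have : h ≠ -1 := by omega
    simp [walkW, reflA, this]
  | succ n ih =>
    intro h hh
    rw [walkW_succ, Fin.sum_univ_three]
    have e0 : h + (((0 : Fin 3) : ℤ) - 1) = h - 1 := by simp; ring
    have e1 : h + (((1 : Fin 3) : ℤ) - 1) = h := by simp
    have e2 : h + (((2 : Fin 3) : ℤ) - 1) = h + 1 := by simp
    rw [e0, e1, e2, if_pos hh, if_pos (show (0 : ℤ) ≤ h + 1 by omega), ih h hh, ih (h + 1) (by omega), reflA]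
    split_ifs with h0
    · rw [ih _ h0]
    · have : h = 0 := by omega
      subst this
      rw [zero_sub, reflA_neg_one]

theorem motzkinPrefix_cast (n : ℕ) : (motzkinPrefix n : ZMod 2) = reflA n 0 := by
  rw [← walkW_eq n 0 le_rfl, motzkinPrefix, walkW]
  simp [Finset.sum_boole]

theorem even_motz_iff (n : ℕ) : Even (motzkinPrefix n) ↔ reflA n 0 = 0 := by
  rw [← motzkinPrefix_cast, ZMod.natCast_eq_zero_iff_even]

theorem inC_iff (m : ℕ) : 0 < m → (inC m = true ↔ reflA (2 * m - 1) 0 = 0) := by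
  induction m using Nat.strong_induction_on with
  | _ m ih =>
    intro hm
    obtain ⟨k, rfl⟩ : ∃ k, m = k + 1 := ⟨m - 1, by omega⟩
    rw [show 2 * (k + 1) - 1 = 2 * k + 1 by omega, reflA_odd_zero, inC]
    rcases Nat.even_or_odd' k with ⟨j, rfl | rfl⟩
    · have := reflA_even_even j 0
      rw [mul_zero] at this
      rw [this, dif_neg (by omega), if_neg (by omega)]
      simp only [true_iff]
      decide
    · have := ih (j + 1) (by omega) (by omega)
      rw [show 2 * (j + 1) - 1 = 2 * j + 1 by omega] at this
      rw [dif_neg (by omega), if_pos (by omega), show (2 * j + 1 + 1) / 2 = j + 1 by omega]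
      rw [Bool.not_eq_true', ← Bool.not_eq_true, this]
      generalize reflA (2 * j + 1) 0 = x
      revert x
      decide

/-- The Motzkin prefix number `P n` is even iff `n = 2m - 1` for some `m ∈ C`. -/
theorem motzkinPrefix_even_iff (n : ℕ) :
    Even (motzkinPrefix n) ↔ ∃ m : ℕ, inC m ∧ n = 2 * m - 1 := by
  rw [even_motz_iff]
  have pos : ∀ m, inC m = true → 0 < m := by
    intro m hm
    rcases Nat.eq_zero_or_pos m with rfl | h
    · rw [inC] at hm
      simp at hm
    · exact h
  constructor
  · intro H
    rcases Nat.even_or_odd' n with ⟨k, rfl | rfl⟩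
    · have := reflA_even_even k 0
      rw [mul_zero, H] at this
      exact absurd this (by decide)
    · exact ⟨k + 1, (inC_iff (k + 1) (by omega)).2 H, by omega⟩
  · rintro ⟨m, hm, rfl⟩
    exact (inC_iff m (pos m hm)).1 hm
end

section
/- The Riordan number γ_n is even if and only if there exists m ∈ C with n = 2m − 1. -/
/-- The Riordan numbers: `γ 0 = 1` and `γ (n+1) = M n - γ n`. -/
def riordan : ℕ → ℤ
  | 0 => 1
  | n + 1 => (motzkin n : ℤ) - riordan n

lemma catalan_conv_odd (j : ℕ) : ((catalan (2 * j + 2) : ℕ) : ZMod 2) = 0 := by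
  rw [show 2 * j + 2 = (2 * j + 1) + 1 by ring, catalan_succ']
  push_cast
  refine Finset.sum_involution (fun p _ => p.swap) ?_ ?_ ?_ ?_
  · rintro ⟨a, b⟩ _
    simp only [Prod.fst_swap, Prod.snd_swap, mul_comm]
    exact CharTwo.add_self_eq_zero _
  · rintro ⟨a, b⟩ h _ h2
    simp only [Finset.HasAntidiagonal.mem_antidiagonal, Prod.swap_prod_mk, Prod.mk.injEq] at h h2
    omega
  · rintro ⟨a, b⟩ h
    simp only [Finset.HasAntidiagonal.mem_antidiagonal, Prod.swap_prod_mk] at h ⊢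
    omega
  · rintro ⟨a, b⟩ _
    rfl

lemma catalan_conv_even (j : ℕ) : ((catalan (2 * j + 1) : ℕ) : ZMod 2) = (catalan j : ℕ) := by
  rw [catalan_succ']
  push_cast
  have hm : (j, j) ∈ Finset.HasAntidiagonal.antidiagonal (2 * j) := by
    simp only [Finset.HasAntidiagonal.mem_antidiagonal]; omega
  rw [← Finset.add_sum_erase _ _ hm]
  have h0 : ∑ x ∈ (Finset.HasAntidiagonal.antidiagonal (2 * j)).erase (j, j),
      ((catalan x.1 : ℕ) : ZMod 2) * ((catalan x.2 : ℕ) : ZMod 2) = 0 := by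
    refine Finset.sum_involution (fun p _ => p.swap) ?_ ?_ ?_ ?_
    · rintro ⟨a, b⟩ _
      simp only [Prod.fst_swap, Prod.snd_swap, mul_comm]
      exact CharTwo.add_self_eq_zero _
    · rintro ⟨a, b⟩ h _ h2
      simp only [Finset.mem_erase, Finset.HasAntidiagonal.mem_antidiagonal, Prod.swap_prod_mk, ne_eq,
        Prod.mk.injEq] at h h2
      omega
    · rintro ⟨a, b⟩ h
      simp only [Finset.mem_erase, Finset.HasAntidiagonal.mem_antidiagonal, Prod.swap_prod_mk, ne_eq,
        Prod.mk.injEq] at h ⊢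
      omega
    · rintro ⟨a, b⟩ _
      rfl
  rw [h0, add_zero]
  generalize ((catalan j : ℕ) : ZMod 2) = x
  revert x
  decide

/-- Partial binomial transform of the Catalan numbers modulo 2. -/
def binCat (N n : ℕ) : ZMod 2 :=
  ∑ k ∈ Finset.range N, ((n.choose k : ℕ) : ZMod 2) * ((catalan k : ℕ) : ZMod 2)

lemma binCat_eq {N n : ℕ} (h : n < N) : binCat N n = binCat (n + 1) n := by
  unfold binCat
  symm
  apply Finset.sum_subset
  · intro x; simp only [Finset.mem_range]; omega
  · intro x _ hx
    simp only [Finset.mem_range] at hx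
    rw [Nat.choose_eq_zero_of_lt (by omega)]
    simp

lemma choose_two_mul (n k : ℕ) :
    ((n.choose (2 * k) : ℕ) : ZMod 2) = (((n / 2).choose k : ℕ) : ZMod 2) := by
  have : Fact (Nat.Prime 2) := ⟨Nat.prime_two⟩
  have h := Choose.choose_modEq_choose_mod_mul_choose_div_nat (n := n) (k := 2 * k) (p := 2)
  rw [← ZMod.natCast_eq_natCast_iff] at h
  simpa using h

lemma motzkin_binCat (n : ℕ) : ((motzkin n : ℕ) : ZMod 2) = binCat (n / 2 + 1) (n / 2) := by
  rw [← binCat_eq (N := n + 1) (by omega)]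
  unfold motzkin binCat
  push_cast
  simp only [choose_two_mul]

lemma sum_shift (n N : ℕ) :
    ∑ k ∈ Finset.range (2 * N), ((n.choose k : ℕ) : ZMod 2) * ((catalan (k + 1) : ℕ) : ZMod 2)
      = ∑ j ∈ Finset.range N, ((n.choose (2 * j) : ℕ) : ZMod 2) * ((catalan j : ℕ) : ZMod 2) := by
  induction N with
  | zero => simp
  | succ N ih =>
    rw [show 2 * (N + 1) = 2 * N + 1 + 1 by ring, Finset.sum_range_succ, Finset.sum_range_succ,
      Finset.sum_range_succ, ih, catalan_conv_even, catalan_conv_odd]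
    simp

lemma binCat_succ (n : ℕ) :
    binCat (n + 2) (n + 1) = ((motzkin n : ℕ) : ZMod 2) + binCat (n + 1) n := by
  rw [← binCat_eq (N := 2 * (n + 1) + 1) (by omega), ← binCat_eq (n := n) (N := 2 * (n + 1) + 1) (by omega)]
  unfold motzkin binCat
  push_cast
  rw [← sum_shift, Finset.sum_range_succ', Finset.sum_range_succ' _ (2 * (n + 1)), ← add_assoc,
    ← Finset.sum_add_distrib]
  simp [Nat.choose_succ_succ, add_mul]

lemma riordan_binCat (n : ℕ) : ((riordan n : ℤ) : ZMod 2) = binCat (n + 1) n := by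
  induction n with
  | zero => simp [riordan, binCat]
  | succ n ih =>
    rw [riordan, binCat_succ]
    push_cast
    rw [ih, CharTwo.sub_eq_add]

lemma riordan_rec (n : ℕ) :
    ((riordan (n + 1) : ℤ) : ZMod 2) = (riordan (n / 2) : ℤ) + (riordan n : ℤ) := by
  rw [riordan_binCat (n / 2), ← motzkin_binCat, riordan]
  push_cast
  rw [CharTwo.sub_eq_add]

lemma riordan_even_index (k : ℕ) : ((riordan (2 * k) : ℤ) : ZMod 2) = 1 := by
  induction k with
  | zero => simp [riordan]
  | succ k ih =>
    rw [show 2 * (k + 1) = 2 * k + 1 + 1 by ring, riordan_rec, riordan_rec, ih,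
      show (2 * k + 1) / 2 = k by omega, show (2 * k) / 2 = k by omega, ← add_assoc,
      CharTwo.add_self_eq_zero, zero_add]

lemma riordan_odd_index (k : ℕ) :
    ((riordan (2 * k + 1) : ℤ) : ZMod 2) = (riordan k : ℤ) + 1 := by
  rw [riordan_rec, riordan_even_index, show (2 * k) / 2 = k by omega]

lemma even_iff_zmod (z : ℤ) : Even z ↔ (z : ZMod 2) = 0 := by
  rw [even_iff_two_dvd, ZMod.intCast_zmod_eq_zero_iff_dvd z 2]; rfl

/-- The Riordan number `γ n` is even iff `n = 2m - 1` for some `m ∈ C`. -/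
theorem riordan_even_iff (n : ℕ) :
    Even (riordan n) ↔ ∃ m : ℕ, inC m ∧ n = 2 * m - 1 := by
  have hpos : ∀ m, inC m = true → m ≠ 0 := by
    rintro m h rfl
    rw [inC] at h
    simp at h
  induction n using Nat.strong_induction_on with
  | _ n ih =>
  rcases Nat.even_or_odd' n with ⟨k, rfl | rfl⟩
  · constructor
    · intro h
      rw [even_iff_zmod, riordan_even_index] at h
      exact absurd h (by decide)
    · rintro ⟨m, hm, h⟩
      have := hpos m hm
      omega
  · have h1 : Even (riordan (2 * k + 1)) ↔ ¬ Even (riordan k) := by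
      rw [even_iff_zmod, even_iff_zmod, riordan_odd_index]
      generalize ((riordan k : ℤ) : ZMod 2) = x
      revert x
      decide
    have h2 : (∃ m : ℕ, inC m ∧ 2 * k + 1 = 2 * m - 1) ↔ inC (k + 1) = true := by
      constructor
      · rintro ⟨m, hm, h⟩
        obtain rfl : m = k + 1 := by omega
        exact hm
      · intro h
        exact ⟨k + 1, h, by omega⟩
    have hk : Even (riordan k) ↔ ∃ m : ℕ, inC m ∧ k = 2 * m - 1 := ih k (by omega)
    rw [h1, hk, h2, inC]
    rcases Nat.even_or_odd' k with ⟨j, rfl | rfl⟩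
    · simp only [Nat.add_eq_zero_iff, one_ne_zero, and_false, dite_false,
        show (2 * j + 1) % 2 = 1 by omega, if_false, iff_true]
      rintro ⟨m, hm, h⟩
      have := hpos m hm
      omega
    · have h3 : (∃ m : ℕ, inC m ∧ 2 * j + 1 = 2 * m - 1) ↔ inC (j + 1) = true := by
        constructor
        · rintro ⟨m, hm, h⟩
          obtain rfl : m = j + 1 := by omega
          exact hm
        · intro h
          exact ⟨j + 1, h, by omega⟩
      rw [h3]
      simp [show (2 * j + 1 + 1) % 2 = 0 by omega, show (2 * j + 1 + 1) / 2 = j + 1 by omega]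
end

section
/- Let p be a prime. If every base-p digit d of n satisfies 2d ≤ p, then binomial(2n, n) ≡ ∏_{j=0}^{p−1} binomial(2j, j)^{δ_{p,j}(n)} (mod p), where δ_{p,j}(n) is the number of base-p digits of n equal to j. If some base-p digit d of n satisfies 2d > p, then binomial(2n, n) ≡ 0 (mod p). -/
theorem cb_zero_aux (p : ℕ) (hp : p.Prime) (n : ℕ) (h : p ≤ 2 * (n % p)) :
    (2 * n).choose n ≡ 0 [MOD p] := by
  haveI := Fact.mk hp
  have hlt := Nat.mod_lt n hp.pos
  have hm : (2 * n) % p = 2 * (n % p) - p := by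
    have h1 : 2 * n = (2 * (n % p) - p) + p * (2 * (n / p) + 1) := by
      have := Nat.mod_add_div n p
      have e : p * (2 * (n / p) + 1) = 2 * (p * (n / p)) + p := by ring
      omega
    rw [h1, Nat.add_mul_mod_self_left, Nat.mod_eq_of_lt (by omega)]
  have := Choose.choose_modEq_choose_mod_mul_choose_div_nat (p := p) (n := 2 * n) (k := n)
  rw [hm, Nat.choose_eq_zero_of_lt (by omega : 2 * (n % p) - p < n % p), zero_mul] at this
  exact this

theorem cb_step (p : ℕ) (hp : p.Prime) (n : ℕ) :
    (2 * n).choose n ≡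
      (2 * (n % p)).choose (n % p) * (2 * (n / p)).choose (n / p) [MOD p] := by
  haveI := Fact.mk hp
  rcases le_or_gt p (2 * (n % p)) with h | h
  · refine (cb_zero_aux p hp n h).trans ?_
    have := (cb_zero_aux p hp (n % p) (by simpa using h)).mul_right
      ((2 * (n / p)).choose (n / p))
    rw [zero_mul] at this
    exact this.symm
  · have h1 : 2 * n = 2 * (n % p) + p * (2 * (n / p)) := by
      have := Nat.mod_add_div n p
      have e : p * (2 * (n / p)) = 2 * (p * (n / p)) := by ring
      omega
    have hm : (2 * n) % p = 2 * (n % p) := by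
      rw [h1, Nat.add_mul_mod_self_left, Nat.mod_eq_of_lt h]
    have hd : (2 * n) / p = 2 * (n / p) := by
      rw [h1, Nat.add_mul_div_left _ _ hp.pos, Nat.div_eq_of_lt h, zero_add]
    have := Choose.choose_modEq_choose_mod_mul_choose_div_nat (p := p) (n := 2 * n) (k := n)
    rwa [hm, hd] at this

theorem cb_prod (p : ℕ) (hp : p.Prime) (n : ℕ) :
    (2 * n).choose n ≡ ((Nat.digits p n).map fun d => (2 * d).choose d).prod [MOD p] := by
  induction n using Nat.strong_induction_on with
  | _ n ih =>
    rcases Nat.eq_zero_or_pos n with rfl | hn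
    · simp [Nat.ModEq.refl]
    · rw [Nat.digits_def' hp.one_lt hn, List.map_cons, List.prod_cons]
      exact (cb_step p hp n).trans ((ih _ (Nat.div_lt_self hn hp.one_lt)).mul_left _)

/-- Central binomial coefficients modulo a prime `p`:  if every base-`p` digit `d` of
`n` satisfies `2d ≤ p`, then `C(2n, n) ≡ ∏_j C(2j, j)^{δ_{p,j}(n)} (mod p)`, where
`δ_{p,j}(n)` is the number of base-`p` digits of `n` equal to `j`; if some base-`p`
digit `d` of `n` satisfies `2d > p`, then `C(2n, n) ≡ 0 (mod p)`. -/
theorem centralBinom_mod_prime (p : ℕ) (hp : p.Prime) (n : ℕ) :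
    ((∀ d ∈ Nat.digits p n, 2 * d ≤ p) →
      (2 * n).choose n ≡
        ∏ j ∈ Finset.range p, ((2 * j).choose j) ^ ((Nat.digits p n).count j) [MOD p]) ∧
    ((∃ d ∈ Nat.digits p n, p < 2 * d) → (2 * n).choose n ≡ 0 [MOD p]) := by
  constructor
  · intro _
    have h := cb_prod p hp n
    rw [Finset.prod_list_map_count] at h
    rwa [Finset.prod_subset (s₂ := Finset.range p)] at h
    · intro d hd
      exact Finset.mem_range.2 (Nat.digits_lt_base hp.one_lt (List.mem_toFinset.1 hd))
    · intro d _ hd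
      rw [List.count_eq_zero_of_not_mem (fun h => hd (List.mem_toFinset.2 h)), pow_zero]
  · rintro ⟨d, hd, h⟩
    refine (cb_prod p hp n).trans ?_
    have hlt := Nat.digits_lt_base hp.one_lt hd
    have h0 := cb_zero_aux p hp d (by rw [Nat.mod_eq_of_lt hlt]; omega)
    rw [Nat.modEq_zero_iff_dvd] at h0 ⊢
    exact h0.trans (List.dvd_prod (List.mem_map.2 ⟨d, hd, rfl⟩))
end

section
/- For every natural number n, the Motzkin number satisfies: M_n ≡ −1 (mod 3) if n = 3m − 1 for some m ∈ T(01); M_n ≡ 1 (mod 3) if n = 3m or n = 3m − 2 for some m ∈ T(01); and M_n ≡ 0 (mod 3) otherwise. -/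
/-- `T(01)`: the natural numbers all of whose base-3 digits are `0` or `1`. -/
def T01 : Set ℕ := {n | ∀ d ∈ Nat.digits 3 n, d = 0 ∨ d = 1}

open PowerSeries in
/-- Generating function of the Motzkin numbers modulo 3. -/
noncomputable def motzkinGF : PowerSeries (ZMod 3) := PowerSeries.mk fun n => (motzkin n : ZMod 3)

open PowerSeries Classical in
/-- Generating function of the indicator of `T01`. -/
noncomputable def tGF : PowerSeries (ZMod 3) := PowerSeries.mk fun n => if n ∈ T01 then 1 else 0

open PowerSeries in
/-- The Catalan generating function modulo 3. -/
noncomputable def catGF : PowerSeries (ZMod 3) := PowerSeries.mk fun n => (catalan n : ZMod 3)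

open PowerSeries in
/-- The series `1 / (1 - X)`. -/
noncomputable def geoGF : PowerSeries (ZMod 3) := PowerSeries.mk 1

open PowerSeries in
lemma catGF_eq : catGF = 1 + X * catGF ^ 2 := by
  have h := congrArg (PowerSeries.map (Nat.castRingHom (ZMod 3))) catalanSeries_sq_mul_X_add_one
  have e : PowerSeries.map (Nat.castRingHom (ZMod 3)) catalanSeries = catGF := by
    ext n; simp [catGF]
  simp only [map_add, map_mul, map_pow, e, map_one, PowerSeries.map_X] at h
  rw [← h]
  rw [h]
  ring_nf
  linear_combination (-1 : PowerSeries (ZMod 3)) * h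

open PowerSeries in
lemma geo_mul : geoGF * (1 - X) = 1 := mk_one_mul_one_sub_eq_one (ZMod 3)

open PowerSeries in
lemma hasSubst_a : HasSubst (X ^ 2 * geoGF ^ 2 : PowerSeries (ZMod 3)) := by
  apply HasSubst.of_constantCoeff_zero'
  simp

open PowerSeries in
lemma coeff_term (n d : ℕ) :
    coeff n (geoGF * (X ^ 2 * geoGF ^ 2) ^ d) = ((n.choose (2 * d) : ℕ) : ZMod 3) := by
  have : geoGF * (X ^ 2 * geoGF ^ 2) ^ d = X ^ (2 * d) * geoGF ^ (2 * d + 1) := by ring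
  rw [this, geoGF, mk_one_pow_eq_mk_choose_add, coeff_X_pow_mul']
  split_ifs with h
  · simp [Nat.add_sub_cancel' h]
  · rw [Nat.choose_eq_zero_of_lt (by omega)]; simp

open PowerSeries in
lemma coeff_a_pow_eq_zero (j d : ℕ) (h : j < d) :
    coeff j ((X ^ 2 * geoGF ^ 2) ^ d : PowerSeries (ZMod 3)) = 0 := by
  rw [mul_pow, ← pow_mul, coeff_X_pow_mul', if_neg (by omega)]

open PowerSeries in
lemma motzkinGF_subst : motzkinGF = geoGF * catGF.subst (X ^ 2 * geoGF ^ 2) := by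
  ext n
  have key : ∀ j ≤ n, coeff j (catGF.subst (X ^ 2 * geoGF ^ 2 : PowerSeries (ZMod 3))) =
      ∑ d ∈ Finset.range (n + 1), (catalan d : ZMod 3) *
        coeff j ((X ^ 2 * geoGF ^ 2) ^ d : PowerSeries (ZMod 3)) := by
    intro j hj
    rw [coeff_subst' hasSubst_a, finsum_eq_sum_of_support_subset (s := Finset.range (n + 1))]
    · simp [catGF]
    · intro d hd
      by_contra hlt
      apply hd
      simp only [Finset.coe_range, Set.mem_Iio, not_lt] at hlt
      simp only [coeff_a_pow_eq_zero j d (by omega), smul_zero]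
  rw [coeff_mul, Finset.sum_congr rfl (fun p hp => by
    rw [key p.2 (by have := Finset.HasAntidiagonal.mem_antidiagonal.1 hp; omega)])]
  simp_rw [Finset.mul_sum]
  rw [Finset.sum_comm]
  simp only [motzkinGF, coeff_mk, motzkin, Nat.cast_sum, Nat.cast_mul]
  refine Finset.sum_congr rfl fun d _ => ?_
  rw [← coeff_term, coeff_mul, Finset.sum_mul]
  refine Finset.sum_congr rfl fun p _ => ?_
  ring

open PowerSeries in
lemma motzkinGF_eq : (1 - X) * motzkinGF = 1 + X ^ 2 * motzkinGF ^ 2 := by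
  have h := congrArg (substAlgHom (R := ZMod 3) hasSubst_a) catGF_eq
  rw [map_add, map_mul, map_pow, map_one, substAlgHom_X, coe_substAlgHom] at h
  rw [motzkinGF_subst]
  set F : PowerSeries (ZMod 3) := catGF.subst (X ^ 2 * geoGF ^ 2)
  have h' : F = 1 + X ^ 2 * geoGF ^ 2 * F ^ 2 := h
  linear_combination F * geo_mul + h'

lemma T01_step (m : ℕ) : m ∈ T01 ↔ m % 3 ≠ 2 ∧ m / 3 ∈ T01 := by
  rcases Nat.eq_zero_or_pos m with rfl | h
  · simp [T01]
  · have h3 : m % 3 < 3 := Nat.mod_lt _ (by norm_num)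
    simp only [T01, Set.mem_ofPred_eq]
    rw [Nat.digits_def' (by norm_num) h]
    simp only [List.mem_cons, forall_eq_or_imp]
    refine and_congr ?_ Iff.rfl
    omega

open PowerSeries in
lemma expand_cube (f : PowerSeries (ZMod 3)) : f.expand 3 (by norm_num) = f ^ 3 := by
  have h := MvPowerSeries.map_frobenius_expand 3 (by norm_num) (f := (f : MvPowerSeries Unit (ZMod 3)))
  rw [ZMod.frobenius_zmod, MvPowerSeries.map_id] at h
  exact h

open PowerSeries in
lemma tGF_step : tGF = (1 + X) * tGF.expand 3 (by norm_num) := by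
  classical
  ext n
  rw [add_mul, one_mul, map_add]
  rcases n with _ | n
  · simp [coeff_expand, tGF]
  · rw [coeff_succ_X_mul, coeff_expand, coeff_expand]
    simp only [tGF, coeff_mk]
    rw [if_congr (T01_step (n + 1)) rfl rfl]
    have h : n % 3 = 0 ∨ n % 3 = 1 ∨ n % 3 = 2 := by omega
    rcases h with h | h | h
    · have h1 : (n + 1) % 3 ≠ 2 := by omega
      have h2 : ¬ 3 ∣ n + 1 := by omega
      have h3 : 3 ∣ n := by omega
      have h4 : (n + 1) / 3 = n / 3 := by omega
      simp [h1, h2, h3, h4]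
    · have h1 : (n + 1) % 3 = 2 := by omega
      have h2 : ¬ 3 ∣ n + 1 := by omega
      have h3 : ¬ 3 ∣ n := by omega
      simp [h1, h2, h3]
    · have h1 : (n + 1) % 3 ≠ 2 := by omega
      have h2 : 3 ∣ n + 1 := by omega
      have h3 : ¬ 3 ∣ n := by omega
      simp [h1, h2, h3]

open PowerSeries in
lemma tGF_const : constantCoeff tGF = 1 := by
  rw [← coeff_zero_eq_constantCoeff_apply]
  simp [tGF, T01]

open PowerSeries in
lemma three_eq_zero : (3 : PowerSeries (ZMod 3)) = 0 := by
  have : (C (3 : ZMod 3) : PowerSeries (ZMod 3)) = 0 := by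
    rw [show (3 : ZMod 3) = 0 from rfl, map_zero]
  rw [← this, map_ofNat]

open PowerSeries in
lemma motzkinGF_formula :
    X ^ 2 * motzkinGF = (1 + 2 * X + X ^ 2) * tGF.expand 3 (by norm_num) - 1 + X := by
  have hG := tGF_step
  have hG0 : tGF ≠ 0 := by
    intro h
    have := tGF_const
    rw [h] at this
    simp at this
  have hsq : (1 + X) * tGF ^ 2 = 1 := by
    apply mul_left_cancel₀ hG0
    rw [expand_cube] at hG
    linear_combination -hG
  have hS : (1 - X - 2 * X ^ 2 * motzkinGF) ^ 2 = ((1 + X) * tGF) ^ 2 := by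
    linear_combination (-4 * X ^ 2) * motzkinGF_eq - (1 + X) * hsq - (X + X ^ 2) * three_eq_zero
  have hT : (1 - X - 2 * X ^ 2 * motzkinGF) = (1 + X) * tGF := by
    rcases sq_eq_sq_iff_eq_or_eq_neg.1 hS with h | h
    · exact h
    · exfalso
      have h2 := congrArg constantCoeff h
      simp [tGF_const] at h2
      exact absurd h2 (by decide)
  linear_combination hT + (1 + X) * hG + X ^ 2 * motzkinGF * three_eq_zero

open PowerSeries Classical in
lemma motzkin_formula (n : ℕ) : (motzkin n : ZMod 3) =
    (if 3 ∣ n + 2 then (if (n + 2) / 3 ∈ T01 then 1 else 0) else 0) +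
    2 * (if 3 ∣ n + 1 then (if (n + 1) / 3 ∈ T01 then 1 else 0) else 0) +
    (if 3 ∣ n then (if n / 3 ∈ T01 then 1 else 0) else 0) := by
  have h := congrArg (coeff (n + 2)) motzkinGF_formula
  have e : (1 + 2 * X + X ^ 2) * tGF.expand 3 (by norm_num) - 1 + X =
    tGF.expand 3 (by norm_num) + C (2 : ZMod 3) * (X ^ 1 * tGF.expand 3 (by norm_num)) +
      X ^ 2 * tGF.expand 3 (by norm_num) - 1 + X := by
    simp only [map_ofNat]; ring
  rw [e] at h
  simp only [map_add, map_sub, coeff_C_mul, coeff_X_pow_mul', coeff_expand, coeff_one, coeff_X] at h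
  simpa [motzkinGF, tGF] using h

/-- Motzkin numbers mod 3: `M n ≡ -1` if `n = 3m - 1` with `m ∈ T(01)`;  `M n ≡ 1`
if `n = 3m` or `n = 3m - 2` with `m ∈ T(01)`;  `M n ≡ 0` otherwise. -/
theorem motzkin_mod_three (n : ℕ) :
    ((∃ m ∈ T01, n + 1 = 3 * m) → (motzkin n : ℤ) ≡ -1 [ZMOD 3]) ∧
    ((∃ m ∈ T01, n = 3 * m ∨ n + 2 = 3 * m) → (motzkin n : ℤ) ≡ 1 [ZMOD 3]) ∧
    (¬ (∃ m ∈ T01, n + 1 = 3 * m ∨ n = 3 * m ∨ n + 2 = 3 * m) →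
      (motzkin n : ℤ) ≡ 0 [ZMOD 3]) := by
  classical
  have key := motzkin_formula n
  refine ⟨?_, ?_, ?_⟩
  · rintro ⟨m, hm, h⟩
    apply (ZMod.intCast_eq_intCast_iff _ _ 3).1
    push_cast
    rw [key, if_neg (by omega), if_pos (by omega),
      if_pos (by rwa [show (n + 1) / 3 = m by omega]), if_neg (by omega)]
    decide
  · rintro ⟨m, hm, h | h⟩
    · apply (ZMod.intCast_eq_intCast_iff _ _ 3).1
      push_cast
      rw [key, if_neg (by omega), if_neg (by omega), if_pos (by omega),
        if_pos (by rwa [show n / 3 = m by omega])]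
      decide
    · apply (ZMod.intCast_eq_intCast_iff _ _ 3).1
      push_cast
      rw [key, if_pos (by omega), if_pos (by rwa [show (n + 2) / 3 = m by omega]),
        if_neg (by omega), if_neg (by omega)]
      decide
  · intro hn
    apply (ZMod.intCast_eq_intCast_iff _ _ 3).1
    push_cast
    have h0 : ∀ k, (k = n + 1 ∨ k = n ∨ k = n + 2) →
        (if 3 ∣ k then (if k / 3 ∈ T01 then (1 : ZMod 3) else 0) else 0) = 0 := by
      intro k hk
      split_ifs with h1 h2
      · exact absurd ⟨k / 3, h2, by omega⟩ hn
      · rfl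
      · rfl
    rw [key, h0 _ (by simp), h0 _ (by simp), h0 _ (by simp)]
    simp
end

section
/- For every natural number n, the Motzkin prefix number satisfies: P_n ≡ 1 (mod 3) if n = 3m for some m ∈ T(01); P_n ≡ −1 (mod 3) if n = 3m + 1 or n = 3m − 1 for some m ∈ T(01); and P_n ≡ 0 (mod 3) otherwise. -/
/-- Number of paths starting at height `k`. -/
def mpF (n : ℕ) (k : ℤ) : ℕ :=
  ∑ s : Fin n → Fin 3,
    if ∀ j : Fin n, 0 ≤ k + ∑ i ∈ Finset.univ.filter (· ≤ j), ((s i : ℤ) - 1) then 1 else 0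

theorem mpF_eq (n : ℕ) : motzkinPrefix n = mpF n 0 := by
  simp only [motzkinPrefix, mpF, Finset.card_filter, zero_add]

theorem mpF_zero (k : ℤ) : mpF 0 k = 1 := by
  simp [mpF]

theorem mpF_cond (n : ℕ) (k : ℤ) (c : Fin 3) (s : Fin n → Fin 3) :
    (∀ j : Fin (n+1), 0 ≤ k + ∑ i ∈ Finset.univ.filter (· ≤ j),
      (((Fin.cons c s : Fin (n+1) → Fin 3) i : ℤ) - 1)) ↔
    (0 ≤ k + ((c : ℤ) - 1) ∧ ∀ j : Fin n, 0 ≤ (k + ((c : ℤ) - 1)) +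
      ∑ i ∈ Finset.univ.filter (· ≤ j), ((s i : ℤ) - 1)) := by
  rw [Fin.forall_fin_succ]
  simp only [Finset.sum_filter, Fin.sum_univ_succ, Fin.cons_zero, Fin.cons_succ,
    Fin.succ_le_succ_iff, Fin.zero_le, if_true, add_assoc]
  simp [Fin.succ_ne_zero]

theorem mpF_succ (n : ℕ) (k : ℤ) :
    mpF (n+1) k = ∑ c : Fin 3, if 0 ≤ k + ((c : ℤ) - 1) then mpF n (k + ((c : ℤ) - 1)) else 0 := by
  unfold mpF
  rw [← (Fin.consEquiv (fun _ : Fin (n+1) => Fin 3)).sum_comp, Fintype.sum_prod_type]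
  refine Finset.sum_congr rfl fun c _ => ?_
  have h : ∀ s : Fin n → Fin 3, (Fin.consEquiv (fun _ : Fin (n+1) => Fin 3)) (c, s) =
    (Fin.cons c s : Fin (n+1) → Fin 3) := fun s => rfl
  simp only [h, mpF_cond]
  split_ifs with h0 <;> simp [h0]

theorem mpF_succ_zero (n : ℕ) : mpF (n+1) 0 = mpF n 0 + mpF n 1 := by
  rw [mpF_succ, Fin.sum_univ_three]; simp

theorem mpF_succ_succ (n k : ℕ) :
    mpF (n+1) ((k+1 : ℕ) : ℤ) = mpF n (k : ℤ) + mpF n ((k+1 : ℕ) : ℤ) + mpF n ((k+2 : ℕ) : ℤ) := by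
  rw [mpF_succ, Fin.sum_univ_three]
  have h1 : ((k+1 : ℕ) : ℤ) + (((0 : Fin 3) : ℤ) - 1) = (k : ℤ) := by simp
  have h2 : ((k+1 : ℕ) : ℤ) + (((1 : Fin 3) : ℤ) - 1) = ((k+1 : ℕ) : ℤ) := by simp
  have h3 : ((k+1 : ℕ) : ℤ) + (((2 : Fin 3) : ℤ) - 1) = ((k+2 : ℕ) : ℤ) := by simp; ring
  rw [h1, h2, h3, if_pos (by positivity), if_pos (by positivity), if_pos (by positivity)]

theorem three_zero : (3 : ZMod 3) = 0 := by decide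

theorem choose_two_s12 (N j : ℕ) : ((N+2).choose (j+2) : ZMod 3) =
    N.choose j + 2 * N.choose (j+1) + N.choose (j+2) := by
  have : (N+2).choose (j+2) = N.choose j + 2 * N.choose (j+1) + N.choose (j+2) := by
    rw [Nat.choose_succ_succ, Nat.choose_succ_succ, Nat.choose_succ_succ N (j+1)]; ring
  rw [this]; push_cast; ring

theorem mpF_closed (n : ℕ) : ∀ k : ℕ, (mpF (n+1) (k : ℤ) : ZMod 3) =
    (-1)^(n+k+1) * (((2*n+1).choose (n+k+1) : ZMod 3) - ((2*n+1).choose (n+k+2) : ZMod 3)) := by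
  induction n with
  | zero =>
    intro k
    cases k with
    | zero => 
      have := mpF_succ_zero 0
      simp only [mpF_zero] at this
      simp only [Nat.cast_zero, this]; decide
    | succ k =>
      rw [mpF_succ_succ]
      simp only [mpF_zero]
      rw [Nat.choose_eq_zero_of_lt (by omega), Nat.choose_eq_zero_of_lt (by omega)]
      simp; decide
  | succ n ih =>
    intro k
    have e : 2*(n+1)+1 = (2*n+1)+2 := by ring
    cases k with
    | zero =>
      have h := mpF_succ_zero (n+1)
      have i0 := ih 0
      have i1 := ih 1
      simp only [Nat.cast_zero, Nat.cast_one] at i0 i1 ⊢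
      rw [h]; push_cast
      rw [i0, i1, e, show n+1+0+1 = n+2 by ring, show n+1+0+2 = n+1+2 by ring, choose_two_s12,
        choose_two_s12]
      have hs : (2*n+1).choose n = (2*n+1).choose (n+1) := by
        apply Nat.choose_symm_of_eq_add; ring
      rw [hs]
      simp only [pow_succ, add_zero]
      linear_combination (-1 : ZMod 3)^n * (-((2*n+1).choose (n+1) : ZMod 3)
        + (2*n+1).choose (n+2)) * three_zero
    | succ k =>
      rw [mpF_succ_succ]; push_cast
      have i0 := ih k
      have i1 := ih (k+1)
      have i2 := ih (k+2)
      push_cast at i0 i1 i2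
      rw [i0, i1, i2, e, show n+1+(k+1)+1 = (n+k+1)+2 by ring,
        show n+1+(k+1)+2 = (n+k+2)+2 by ring, choose_two_s12, choose_two_s12]
      simp only [show n+(k+1)+1 = n+k+2 by ring, show n+(k+1)+2 = n+k+3 by ring,
        show n+(k+2)+1 = n+k+3 by ring, show n+(k+2)+2 = n+k+4 by ring,
        show n+k+1+1 = n+k+2 by ring, show n+k+1+2 = n+k+3 by ring,
        show n+k+2+1 = n+k+3 by ring, show n+k+2+2 = n+k+4 by ring]
      simp only [pow_succ]
      linear_combination (-1 : ZMod 3)^n * (-1)^k * (((2*n+1).choose (n+k+2) : ZMod 3)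
        - (2*n+1).choose (n+k+3)) * three_zero

theorem P_closed (n : ℕ) : (motzkinPrefix n : ZMod 3) =
    (-1)^n * (((2*n).choose n : ZMod 3) - ((2*n).choose (n+1) : ZMod 3)) := by
  cases n with
  | zero => rw [mpF_eq, mpF_zero]; simp
  | succ n =>
    have h := mpF_closed n 0
    simp only [Nat.cast_zero, add_zero] at h
    rw [mpF_eq, h]
    have h1 : (2*(n+1)).choose (n+1) = (2*n+1).choose (n+1) + (2*n+1).choose (n+1) := by
      have hs : (2*n+1).choose n = (2*n+1).choose (n+1) := by
        apply Nat.choose_symm_of_eq_add; ring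
      rw [show 2*(n+1) = 2*n+1+1 by ring, Nat.choose_succ_succ, hs]
    have h2 : (2*(n+1)).choose (n+1+1) = (2*n+1).choose (n+1) + (2*n+1).choose (n+2) := by
      rw [show 2*(n+1) = 2*n+1+1 by ring, Nat.choose_succ_succ]
    rw [h1, h2]; push_cast; ring

theorem lucas3 (a b r t : ℕ) (hr : r < 3) (ht : t < 3) :
    ((3*a+r).choose (3*b+t) : ZMod 3) = r.choose t * a.choose b := by
  have : Fact (Nat.Prime 3) := ⟨by norm_num⟩
  have h := @Choose.choose_modEq_choose_mod_mul_choose_div_nat (3*a+r) (3*b+t) 3 _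
  rw [← ZMod.natCast_eq_natCast_iff] at h
  rw [h, show (3*a+r)%3 = r by omega, show (3*b+t)%3 = t by omega,
    show (3*a+r)/3 = a by omega, show (3*b+t)/3 = b by omega]
  push_cast; ring

/-- Signed central binomial coefficient modulo 3. -/
def bb (m : ℕ) : ZMod 3 := (-1)^m * ((2*m).choose m : ZMod 3)

theorem bb0 (m : ℕ) : bb (3*m) = bb m := by
  have := lucas3 (2*m) m 0 0 (by norm_num) (by norm_num)
  unfold bb
  rw [show 2*(3*m) = 3*(2*m)+0 by ring]
  simp only [add_zero] at this ⊢
  rw [this, pow_mul]; norm_num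

theorem bb1 (m : ℕ) : bb (3*m+1) = bb m := by
  have := lucas3 (2*m) m 2 1 (by norm_num) (by norm_num)
  unfold bb
  rw [show 2*(3*m+1) = 3*(2*m)+2 by ring, this, pow_succ, pow_mul]
  norm_num
  linear_combination (-(-1 : ZMod 3)^m * ((2*m).choose m : ZMod 3)) * three_zero

theorem bb2 (m : ℕ) : bb (3*m+2) = 0 := by
  have := lucas3 (2*m+1) m 1 2 (by norm_num) (by norm_num)
  unfold bb
  rw [show 2*(3*m+2) = 3*(2*m+1)+1 by ring, this]
  simp

theorem P0 (m : ℕ) : (motzkinPrefix (3*m) : ZMod 3) = bb m := by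
  have h1 := lucas3 (2*m) m 0 0 (by norm_num) (by norm_num)
  have h2 := lucas3 (2*m) m 0 1 (by norm_num) (by norm_num)
  simp only [add_zero] at h1 h2
  rw [P_closed, show 2*(3*m) = 3*(2*m) by ring, h1, h2, pow_mul]
  norm_num [bb]

theorem P1 (m : ℕ) : (motzkinPrefix (3*m+1) : ZMod 3) = -bb m := by
  have h1 := lucas3 (2*m) m 2 1 (by norm_num) (by norm_num)
  have h2 := lucas3 (2*m) m 2 2 (by norm_num) (by norm_num)
  rw [P_closed, show 2*(3*m+1) = 3*(2*m)+2 by ring, h1, h2, pow_succ, pow_mul]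
  norm_num [bb]
  ring

theorem P2 (m : ℕ) : (motzkinPrefix (3*m+2) : ZMod 3) = -bb (m+1) := by
  have h1 := lucas3 (2*m+1) m 1 2 (by norm_num) (by norm_num)
  have h2 := lucas3 (2*m+1) (m+1) 1 0 (by norm_num) (by norm_num)
  have hb : (2*(m+1)).choose (m+1) = 2 * (2*m+1).choose (m+1) := by
    have hs : (2*m+1).choose m = (2*m+1).choose (m+1) := by
      apply Nat.choose_symm_of_eq_add; ring
    rw [show 2*(m+1) = 2*m+1+1 by ring, Nat.choose_succ_succ, hs]; ring
  rw [P_closed, show 2*(3*m+2) = 3*(2*m+1)+1 by ring, h1,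
    show 3*m+2+1 = 3*(m+1)+0 by ring, h2, pow_add, pow_mul]
  unfold bb
  rw [hb, pow_succ]
  norm_num
  linear_combination ((-1 : ZMod 3)^m * ((2*m+1).choose (m+1) : ZMod 3)) * three_zero

theorem T01_step_s12 (m r : ℕ) (hr : r < 3) :
    3*m+r ∈ T01 ↔ (r = 0 ∨ r = 1) ∧ m ∈ T01 := by
  unfold T01
  simp only [Set.mem_setOf_eq]
  by_cases h : m = 0 ∧ r = 0
  · obtain ⟨rfl, rfl⟩ := h; simp
  · rw [show 3*m+r = r + 3*m by ring, Nat.digits_add 3 (by norm_num) r m hr (by omega)]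
    simp

theorem bb_T (m : ℕ) : (m ∈ T01 → bb m = 1) ∧ (m ∉ T01 → bb m = 0) := by
  induction m using Nat.strong_induction_on with
  | _ m ih =>
    by_cases h0 : m = 0
    · subst h0; simp [T01, bb]
    obtain ⟨q, r, hr, rfl⟩ : ∃ q r, r < 3 ∧ m = 3*q+r := ⟨m/3, m%3, by omega, by omega⟩
    have := ih q (by omega)
    rw [T01_step_s12 q r hr]
    interval_cases r
    · simpa [bb0] using this
    · simpa [bb1] using this
    · simp [bb2]

/-- Motzkin prefix numbers mod 3: `P n ≡ 1` if `n = 3m` with `m ∈ T(01)`;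
`P n ≡ -1` if `n = 3m + 1` or `n = 3m - 1` with `m ∈ T(01)`;  `P n ≡ 0` otherwise. -/
theorem motzkinPrefix_mod_three (n : ℕ) :
    ((∃ m ∈ T01, n = 3 * m) → (motzkinPrefix n : ℤ) ≡ 1 [ZMOD 3]) ∧
    ((∃ m ∈ T01, n = 3 * m + 1 ∨ n + 1 = 3 * m) → (motzkinPrefix n : ℤ) ≡ -1 [ZMOD 3]) ∧
    (¬ (∃ m ∈ T01, n = 3 * m ∨ n = 3 * m + 1 ∨ n + 1 = 3 * m) →
      (motzkinPrefix n : ℤ) ≡ 0 [ZMOD 3]) := by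
  have key : ∀ z : ℤ, (motzkinPrefix n : ZMod 3) = (z : ZMod 3) →
      (motzkinPrefix n : ℤ) ≡ z [ZMOD 3] := by
    intro z hz
    rw [← Nat.cast_ofNat (n := 3), ← ZMod.intCast_eq_intCast_iff]
    simpa using hz
  refine ⟨?_, ?_, ?_⟩
  · rintro ⟨m, hm, rfl⟩
    apply key
    rw [P0, (bb_T m).1 hm]; simp
  · rintro ⟨m, hm, rfl | h⟩
    · apply key
      rw [P1, (bb_T m).1 hm]; simp
    · obtain ⟨q, rfl⟩ : ∃ q, m = q+1 := ⟨m-1, by omega⟩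
      obtain rfl : n = 3*q+2 := by omega
      apply key
      rw [P2, (bb_T _).1 hm]; simp
  · intro h
    apply key
    obtain ⟨q, r, hr, rfl⟩ : ∃ q r, r < 3 ∧ n = 3*q+r := ⟨n/3, n%3, by omega, by omega⟩
    interval_cases r
    · rw [add_zero, P0, (bb_T q).2 fun hq => h ⟨q, hq, by omega⟩]; simp
    · rw [P1, (bb_T q).2 fun hq => h ⟨q, hq, by omega⟩]; simp
    · rw [P2, (bb_T (q+1)).2 fun hq => h ⟨q+1, hq, by omega⟩]; simp
end

section
/- For every natural number n, the Riordan number satisfies: γ_n ≡ 1 (mod 3) if n = m − 1 for some m ∈ T(01), and γ_n ≡ 0 (mod 3) otherwise. -/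
namespace RiordanAux

open PowerSeries

noncomputable def A : (ZMod 3)⟦X⟧ := mk 1

noncomputable def Y : (ZMod 3)⟦X⟧ := X ^ 2 * A ^ 2

noncomputable def Cs : (ZMod 3)⟦X⟧ := mk fun n => (catalan n : ZMod 3)

noncomputable def Ms : (ZMod 3)⟦X⟧ := mk fun n => (motzkin n : ZMod 3)

noncomputable def Rs : (ZMod 3)⟦X⟧ := mk fun n => (riordan n : ZMod 3)

lemma hasSubst_Y : HasSubst Y :=
  HasSubst.of_constantCoeff_zero' (by simp [Y])

lemma Cs_eq : Cs = Cs ^ 2 * X + 1 := by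
  have h : Cs = PowerSeries.map (Nat.castRingHom (ZMod 3)) catalanSeries := by
    ext n; simp [Cs]
  have h2 := congrArg (PowerSeries.map (Nat.castRingHom (ZMod 3))) catalanSeries_sq_mul_X_add_one
  simp only [map_add, map_mul, map_pow, map_one, PowerSeries.map_X, ← h] at h2
  exact h2.symm

lemma coeff_Y_pow (k e : ℕ) (h : e < k) : coeff e (Y ^ k) = 0 := by
  rw [Y, mul_pow, ← pow_mul, coeff_X_pow_mul', if_neg (by omega)]

lemma coeff_A_Y (n k : ℕ) : coeff n (A * Y ^ k) = (n.choose (2 * k) : ZMod 3) := by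
  have : A * Y ^ k = X ^ (2 * k) * A ^ (2 * k + 1) := by rw [Y]; ring
  rw [this, coeff_X_pow_mul', A, mk_one_pow_eq_mk_choose_add]
  split_ifs with h
  · rw [coeff_mk]; congr 2; omega
  · rw [Nat.choose_eq_zero_of_lt (by omega)]; simp

lemma Ms_eq : Ms = A * Cs.subst Y := by
  ext n
  have h1 : coeff n (A * Cs.subst Y) =
      coeff n (A * ∑ k ∈ Finset.range (n + 1), C (catalan k : ZMod 3) * Y ^ k) := by
    rw [coeff_mul, coeff_mul]
    refine Finset.sum_congr rfl fun p hp => ?_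
    congr 1
    have hp' := Finset.HasAntidiagonal.mem_antidiagonal.1 hp
    rw [coeff_subst' hasSubst_Y, map_sum, finsum_eq_sum_of_support_subset (s := Finset.range (n+1))]
    · refine Finset.sum_congr rfl fun k _ => ?_
      rw [coeff_C_mul, Cs, coeff_mk, smul_eq_mul]
    · intro k hk
      by_contra hc
      simp at hc
      apply hk
      simp only
      rw [coeff_Y_pow _ _ (by omega), smul_zero]
  rw [h1, Finset.mul_sum, map_sum, Ms, coeff_mk, motzkin]
  push_cast
  refine Finset.sum_congr rfl fun k _ => ?_
  rw [mul_left_comm, coeff_C_mul, coeff_A_Y, mul_comm]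

lemma A_mul : A * (1 - X) = 1 := mk_one_mul_one_sub_eq_one _

lemma Ms_quad : (1 - X) * Ms = 1 + X ^ 2 * Ms ^ 2 := by
  have h := congrArg (PowerSeries.subst Y) Cs_eq
  rw [subst_add hasSubst_Y, subst_mul hasSubst_Y, subst_pow hasSubst_Y, subst_X hasSubst_Y,
    show (1 : (ZMod 3)⟦X⟧).subst Y = 1 by
      rw [← coe_substAlgHom hasSubst_Y]; exact map_one _] at h
  rw [Ms_eq]
  have hA := A_mul
  rw [Y] at *
  linear_combination h + (subst (X ^ 2 * A ^ 2) Cs) * hA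

lemma Rs_eq : (1 + X) * Rs = 1 + X * Ms := by
  ext n
  rcases n with _ | n
  · simp [Rs, riordan]
  · simp [add_mul, Rs, Ms, coeff_succ_X_mul, coeff_one, riordan]

noncomputable def G : (ZMod 3)⟦X⟧ := 1 + X * Rs

lemma three : (3 : (ZMod 3)⟦X⟧) = 0 := by
  have : (3 : ZMod 3) = 0 := by decide
  have h := congrArg (C (R := ZMod 3)) this
  rw [map_zero] at h
  rw [← h]
  exact (map_ofNat (C (R := ZMod 3)) 3).symm

lemma G_sq : (1 + X) * G ^ 2 = 1 := by
  have hne : (1 + X : (ZMod 3)⟦X⟧) ≠ 0 := by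
    intro h
    have := congrArg (coeff 0) h
    simp at this
  apply mul_left_cancel₀ hne
  have h3 := three
  have hR := Rs_eq
  have hM := Ms_quad
  have key : (1 + X) * (X * (1 + X) * Rs ^ 2 - (1 + X) * Rs + 1) = 0 := by
    linear_combination (X * (1 + X) * Rs + X + X ^ 2 * Ms - (1 + X)) * hR - X * hM
  rw [G]
  linear_combination X * key + (1 + X) ^ 2 * X * Rs * h3

lemma G_cube : G ^ 3 = G.expand 3 (by norm_num) := by
  have h := MvPowerSeries.map_frobenius_expand (R := ZMod 3) (σ := Unit) 3 (by norm_num) (f := G)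
  rw [ZMod.frobenius_zmod] at h
  rw [← show MvPowerSeries.map (RingHom.id (ZMod 3)) (MvPowerSeries.expand 3 (by norm_num) G)
    = G ^ 3 from h]
  simp [PowerSeries.expand]

lemma G_eq : G = (1 + X) * G.expand 3 (by norm_num) := by
  rw [← G_cube]
  linear_combination (-G) * G_sq

lemma G_zero : coeff 0 G = 1 := by simp [G]

lemma G_succ (n : ℕ) : coeff (n + 1) G = (riordan n : ZMod 3) := by
  simp [G, coeff_succ_X_mul, coeff_one, Rs]

lemma G_step (n : ℕ) : coeff n G = if n % 3 = 2 then 0 else coeff (n / 3) G := by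
  conv_lhs => rw [G_eq]
  rcases n with _ | n
  · simp
  · rw [add_mul, one_mul, map_add, coeff_succ_X_mul, coeff_expand, coeff_expand]
    have : (n + 1) % 3 = 0 ∨ (n + 1) % 3 = 1 ∨ (n + 1) % 3 = 2 := by omega
    rcases this with h | h | h
    · rw [if_pos (by omega), if_neg (by omega), if_neg (by omega), add_zero]
    · rw [if_neg (by omega), if_pos (by omega), if_neg (by omega), zero_add]
      congr 2; omega
    · rw [if_neg (by omega), if_neg (by omega), if_pos h, add_zero]

lemma T01_step (n : ℕ) (hn : 0 < n) : n ∈ T01 ↔ n % 3 ≠ 2 ∧ n / 3 ∈ T01 := by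
  simp only [T01, Set.mem_ofPred_eq]
  rw [Nat.digits_def' (by norm_num) hn]
  simp only [List.mem_cons, forall_eq_or_imp]
  have : (n % 3 = 0 ∨ n % 3 = 1) ↔ n % 3 ≠ 2 := by omega
  rw [this]

open Classical in
lemma G_coeff (n : ℕ) : coeff n G = if n ∈ T01 then 1 else 0 := by
  induction n using Nat.strong_induction_on with
  | _ n ih =>
    rcases Nat.eq_zero_or_pos n with rfl | hn
    · rw [G_zero, if_pos (by simp [T01])]
    · rw [G_step, ih (n / 3) (by omega)]
      have := T01_step n hn
      by_cases h : n % 3 = 2 <;> simp [h, this]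

end RiordanAux

/-- Riordan numbers mod 3: `γ n ≡ 1 (mod 3)` if `n = m - 1` for some `m ∈ T(01)`,
and `γ n ≡ 0 (mod 3)` otherwise. -/
theorem riordan_mod_three (n : ℕ) :
    ((∃ m ∈ T01, n + 1 = m) → riordan n ≡ 1 [ZMOD 3]) ∧
    (¬ (∃ m ∈ T01, n + 1 = m) → riordan n ≡ 0 [ZMOD 3]) := by
  have h := RiordanAux.G_coeff (n + 1)
  rw [RiordanAux.G_succ] at h
  constructor
  · rintro ⟨m, hm, rfl⟩
    rw [if_pos hm] at h
    exact (ZMod.intCast_eq_intCast_iff _ _ 3).1 (by simpa using h)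
  · intro hm
    rw [if_neg (fun hc => hm ⟨_, hc, rfl⟩)] at h
    exact (ZMod.intCast_eq_intCast_iff _ _ 3).1 (by simpa using h)
end

section
/- Let p be a prime and n a natural number. Then the number of k with 0 ≤ k ≤ n such that binomial(n, k) is not divisible by p equals ∏_{j=0}^{p−1} (j+1)^{δ_{p,j}(n)}, where δ_{p,j}(n) is the number of base-p digits of n equal to j. In particular, for p = 2, the number of odd entries in the n-th row of Pascal's triangle is 2^{δ(n)}, where δ(n) is the number of ones in the binary expansion of n. -/
theorem gould_step_iff (p : ℕ) (hp : p.Prime) (n k : ℕ) :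
    ¬ p ∣ n.choose k ↔ k % p ≤ n % p ∧ ¬ p ∣ (n / p).choose (k / p) := by
  have := Fact.mk hp
  have h := Choose.choose_modEq_choose_mod_mul_choose_div_nat (n := n) (k := k) (p := p)
  rw [h.dvd_iff dvd_rfl, hp.dvd_mul, not_or]
  refine and_congr_left fun _ => ?_
  constructor
  · intro h1
    by_contra h2
    exact h1 (by rw [Nat.choose_eq_zero_of_lt (not_le.mp h2)]; exact dvd_zero p)
  · intro h1 h2
    have h3 : p ∣ (n % p).factorial := by
      rw [← Nat.choose_mul_factorial_mul_factorial h1, mul_assoc]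
      exact h2.mul_right _
    exact absurd ((hp.dvd_factorial).mp h3) (not_le.mpr (Nat.mod_lt _ hp.pos))

theorem gould_card_step (p : ℕ) (hp : p.Prime) (n : ℕ) :
    ((Finset.range (n + 1)).filter fun k => ¬ p ∣ n.choose k).card =
      (n % p + 1) *
        ((Finset.range (n / p + 1)).filter fun k => ¬ p ∣ (n / p).choose k).card := by
  rw [← Finset.card_range (n % p + 1), ← Finset.card_product]
  have key : ∀ m k : ℕ, ¬ p ∣ m.choose k → k < m + 1 := by
    intro m k h
    by_contra h2
    exact h (by rw [Nat.choose_eq_zero_of_lt (by omega)]; exact dvd_zero p)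
  refine Finset.card_bij' (fun k _ => (k % p, k / p)) (fun x _ => x.1 + p * x.2) ?_ ?_ ?_ ?_
  · intro k hk
    simp only [Finset.mem_filter, Finset.mem_product, Finset.mem_range] at hk ⊢
    have h := (gould_step_iff p hp n k).mp hk.2
    exact ⟨by omega, key _ _ h.2, h.2⟩
  · rintro ⟨a, b⟩ hx
    simp only [Finset.mem_filter, Finset.mem_product, Finset.mem_range] at hx ⊢
    have hn := Nat.mod_lt n hp.pos
    have ha : a < p := by omega
    have h : ¬ p ∣ n.choose (a + p * b) := by
      rw [gould_step_iff p hp, Nat.add_mul_mod_self_left, Nat.add_mul_div_left _ _ hp.pos,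
        Nat.mod_eq_of_lt ha, Nat.div_eq_of_lt ha, zero_add]
      exact ⟨by omega, hx.2.2⟩
    exact ⟨key _ _ h, h⟩
  · intro k _
    exact Nat.mod_add_div k p
  · rintro ⟨a, b⟩ hx
    simp only [Finset.mem_filter, Finset.mem_product, Finset.mem_range] at hx
    have hn := Nat.mod_lt n hp.pos
    have ha : a < p := by omega
    simp only [Nat.add_mul_mod_self_left, Nat.add_mul_div_left _ _ hp.pos,
        Nat.mod_eq_of_lt ha, Nat.div_eq_of_lt ha, zero_add]

theorem gould_general (p : ℕ) (hp : p.Prime) (n : ℕ) :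
    ((Finset.range (n + 1)).filter fun k => ¬ p ∣ n.choose k).card =
      ∏ j ∈ Finset.range p, (j + 1) ^ ((Nat.digits p n).count j) := by
  induction n using Nat.strong_induction_on with
  | _ n ih =>
    rcases Nat.eq_zero_or_pos n with rfl | hn
    · simp [Finset.filter_singleton, hp.ne_one]
    · rw [gould_card_step p hp, ih _ (Nat.div_lt_self hn hp.one_lt),
        Nat.digits_def' hp.one_lt hn]
      simp only [List.count_cons, pow_add, Finset.prod_mul_distrib]
      rw [mul_comm]
      congr 1
      rw [Finset.prod_eq_single (n % p)]
      · simp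
      · intro b _ hb
        simp [hb.symm]
      · intro h
        exact absurd (Finset.mem_range.mpr (Nat.mod_lt n hp.pos)) h


/-- Gould's sequence generalized: for a prime `p`, the number of entries in the
`n`-th row of Pascal's triangle not divisible by `p` equals
`∏_{j<p} (j+1)^{δ_{p,j}(n)}`, where `δ_{p,j}(n)` counts the base-`p` digits of `n`
equal to `j`.  In particular, for `p = 2` the number of odd entries in the `n`-th
row is `2^{δ(n)}` with `δ(n)` the number of ones in the binary expansion of `n`. -/
theorem gould_sequence (p : ℕ) (hp : p.Prime) (n : ℕ) :
    (((Finset.range (n + 1)).filter fun k => ¬ p ∣ n.choose k).card =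
      ∏ j ∈ Finset.range p, (j + 1) ^ ((Nat.digits p n).count j)) ∧
    (((Finset.range (n + 1)).filter fun k => ¬ 2 ∣ n.choose k).card =
      2 ^ ((Nat.digits 2 n).count 1)) := by
  refine ⟨gould_general p hp n, ?_⟩
  rw [gould_general 2 Nat.prime_two n]
  simp [Finset.prod_range_succ]
end

section
/- Let r and s be positive integers and for each natural number n set a_n(r, s) = ∑_{k=0}^{n} binomial(n, k)^r · binomial(n+k, k)^s. Then: if s is even, a_n(r, s) ≡ (−1)^{δ_3(n)} (mod 3) for all n; if s is odd and n ∈ T(02), then a_n(r, s) ≡ 1 (mod 3); and if s is odd and n ∉ T(02), then a_n(r, s) ≡ 0 (mod 3). (The cases r = s = 1 and r = 2, s = 1 give the central Delannoy numbers and the Apéry numbers, respectively.) -/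
/-- `T(02)`: the natural numbers all of whose base-3 digits are `0` or `2`. -/
def T02 : Set ℕ := {n | ∀ d ∈ Nat.digits 3 n, d = 0 ∨ d = 2}

/-- `δ_3 n`: the number of base-3 digits of `n` equal to `1`. -/
def delta3 (n : ℕ) : ℕ := (Nat.digits 3 n).count 1

/-- The summand in `ZMod 3`. -/
def fz (r s n k : ℕ) : ZMod 3 := (n.choose k : ZMod 3) ^ r * ((n + k).choose k : ZMod 3) ^ s

/-- The sum in `ZMod 3`. -/
def az (r s n : ℕ) : ZMod 3 := ∑ k ∈ Finset.range (n + 1), fz r s n k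

theorem lucas3_s18 (m q i j : ℕ) (hj : j < 3) (hi : i < 3) :
    ((3 * m + i).choose (3 * q + j) : ZMod 3) = (i.choose j : ZMod 3) * (m.choose q : ZMod 3) := by
  haveI : Fact (Nat.Prime 3) := ⟨Nat.prime_three⟩
  have h := Choose.choose_modEq_choose_mod_mul_choose_div_nat (n := 3 * m + i)
    (k := 3 * q + j) (p := 3)
  rw [show (3 * m + i) % 3 = i by omega, show (3 * q + j) % 3 = j by omega,
    show (3 * m + i) / 3 = m by omega, show (3 * q + j) / 3 = q by omega] at h
  have h2 := (ZMod.natCast_eq_natCast_iff _ _ _).2 h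
  rw [h2]
  push_cast
  rfl

theorem lucas3' (m q i j : ℕ) (hj : j < 3) (hi : i < 3) :
    ((3 * m + i + (3 * q + j)).choose (3 * q + j) : ZMod 3) =
      ((i + j).choose j : ZMod 3) * ((m + q).choose q : ZMod 3) := by
  by_cases h : i + j < 3
  · rw [show 3 * m + i + (3 * q + j) = 3 * (m + q) + (i + j) by ring, lucas3_s18 _ _ _ _ hj h]
  · have e : 3 * m + i + (3 * q + j) = 3 * (m + q + 1) + (i + j - 3) := by omega
    rw [e, lucas3_s18 _ _ _ _ hj (by omega), Nat.choose_eq_zero_of_lt (by omega)]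
    have : ((i + j).choose j : ZMod 3) = 0 := by
      interval_cases i <;> interval_cases j <;> first | omega | decide
    rw [this]
    simp

theorem fz_mul (r s m q i j : ℕ) (hj : j < 3) (hi : i < 3) :
    fz r s (3 * m + i) (3 * q + j) = fz r s i j * fz r s m q := by
  unfold fz
  rw [lucas3_s18 _ _ _ _ hj hi, lucas3' _ _ _ _ hj hi, mul_pow, mul_pow]
  ring

theorem sum_three (f : ℕ → ZMod 3) (m : ℕ) :
    ∑ k ∈ Finset.range (3 * m), f k =
      ∑ q ∈ Finset.range m, (f (3 * q + 0) + f (3 * q + 1) + f (3 * q + 2)) := by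
  induction m with
  | zero => simp
  | succ m ih =>
    rw [show 3 * (m + 1) = 3 * m + 1 + 1 + 1 by ring, Finset.sum_range_succ,
      Finset.sum_range_succ, Finset.sum_range_succ, ih, Finset.sum_range_succ]
    ring_nf

theorem az_ext (r s n N : ℕ) (hr : 0 < r) (h : n + 1 ≤ N) :
    az r s n = ∑ k ∈ Finset.range N, fz r s n k := by
  unfold az
  apply Finset.sum_subset
  · intro x hx
    simp only [Finset.mem_range] at *
    omega
  · intro x _ hx
    simp only [Finset.mem_range] at hx
    unfold fz
    rw [Nat.choose_eq_zero_of_lt (by omega), Nat.cast_zero, zero_pow (by omega), zero_mul]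

theorem az_mul (r s m i : ℕ) (hr : 0 < r) (hi : i < 3) :
    az r s (3 * m + i) = az r s i * az r s m := by
  rw [az_ext r s (3 * m + i) (3 * (m + 1)) hr (by omega), sum_three,
    az_ext r s i 3 hr (by omega), az, Finset.mul_sum]
  apply Finset.sum_congr rfl
  intro q _
  rw [fz_mul _ _ _ _ _ _ (by norm_num) hi, fz_mul _ _ _ _ _ _ (by norm_num) hi,
    fz_mul _ _ _ _ _ _ (by norm_num) hi]
  simp only [Finset.sum_range_succ, Finset.sum_range_zero]
  ring

theorem az_zero (r s : ℕ) : az r s 0 = 1 := by simp [az, fz]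

theorem az_one (r s : ℕ) : az r s 1 = 1 + (-1) ^ s := by
  simp [az, fz, Finset.sum_range_succ]
  rfl

theorem az_two (r s : ℕ) (hs : 0 < s) : az r s 2 = 1 := by
  have h3 : ((Nat.choose 3 1 : ℕ) : ZMod 3) = 0 := by decide
  have h6 : ((Nat.choose 4 2 : ℕ) : ZMod 3) = 0 := by decide
  simp only [az, fz, Finset.sum_range_succ, Finset.sum_range_zero]
  norm_num only [Nat.reduceAdd, h3, h6, zero_pow hs.ne']
  simp

theorem digits_step (n : ℕ) (hn : 0 < n) :
    Nat.digits 3 n = n % 3 :: Nat.digits 3 (n / 3) :=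
  Nat.digits_def' (by norm_num) hn

theorem az_even (r s : ℕ) (hr : 0 < r) (hs : 0 < s) (he : Even s) (n : ℕ) :
    az r s n = (-1) ^ delta3 n := by
  induction n using Nat.strong_induction_on with
  | _ n ih =>
    rcases Nat.eq_zero_or_pos n with rfl | hn
    · simp [az_zero, delta3]
    · have hd : delta3 n = delta3 (n / 3) + if n % 3 = 1 then 1 else 0 := by
        unfold delta3
        rw [digits_step n hn, List.count_cons]
        simp
      have hm := az_mul r s (n / 3) (n % 3) hr (by omega)
      rw [Nat.div_add_mod] at hm
      rw [hm, ih (n / 3) (by omega), hd]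
      have : n % 3 < 3 := by omega
      interval_cases n % 3
      · simp [az_zero]
      · rw [az_one, he.neg_one_pow, if_pos rfl, pow_succ, mul_comm]
        rfl
      · simp [az_two r s hs]

theorem az_odd (r s : ℕ) (hr : 0 < r) (hs : 0 < s) (ho : Odd s) (n : ℕ) :
    (n ∈ T02 → az r s n = 1) ∧ (n ∉ T02 → az r s n = 0) := by
  induction n using Nat.strong_induction_on with
  | _ n ih =>
    rcases Nat.eq_zero_or_pos n with rfl | hn
    · simp [az_zero, T02]
    · have hd : n ∈ T02 ↔ (n % 3 = 0 ∨ n % 3 = 2) ∧ n / 3 ∈ T02 := by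
        simp only [T02, Set.mem_ofPred_eq]
        rw [digits_step n hn, List.forall_mem_cons]
      have hm := az_mul r s (n / 3) (n % 3) hr (by omega)
      rw [Nat.div_add_mod] at hm
      have := ih (n / 3) (by omega)
      rw [hm, hd]
      have : n % 3 < 3 := by omega
      interval_cases n % 3
      · simpa [az_zero]
      · simp [az_one, ho.neg_one_pow]
      · simpa [az_two r s hs]

theorem cast_iff (r s n : ℕ) (c : ℤ) (h : az r s n = (c : ZMod 3)) :
    (∑ k ∈ Finset.range (n + 1), (n.choose k : ℤ) ^ r * ((n + k).choose k : ℤ) ^ s) ≡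
        c [ZMOD 3] := by
  apply (ZMod.intCast_eq_intCast_iff _ _ 3).1
  rw [← h]
  simp [az, fz]

/-- For positive `r`, `s`, the numbers `a_n(r,s) = ∑_k C(n,k)^r C(n+k,k)^s`
(central Delannoy numbers for `r = s = 1`, Apéry numbers for `r = 2`, `s = 1`)
satisfy: `a_n(r,s) ≡ (-1)^{δ_3(n)} (mod 3)` if `s` is even;  `a_n(r,s) ≡ 1 (mod 3)`
if `s` is odd and `n ∈ T(02)`;  and `a_n(r,s) ≡ 0 (mod 3)` otherwise. -/
theorem apery_delannoy_mod_three (r s : ℕ) (hr : 0 < r) (hs : 0 < s) (n : ℕ) :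
    (Even s →
      (∑ k ∈ Finset.range (n + 1), (n.choose k : ℤ) ^ r * ((n + k).choose k : ℤ) ^ s) ≡
        (-1) ^ delta3 n [ZMOD 3]) ∧
    (Odd s → n ∈ T02 →
      (∑ k ∈ Finset.range (n + 1), (n.choose k : ℤ) ^ r * ((n + k).choose k : ℤ) ^ s) ≡
        1 [ZMOD 3]) ∧
    (Odd s → n ∉ T02 →
      (∑ k ∈ Finset.range (n + 1), (n.choose k : ℤ) ^ r * ((n + k).choose k : ℤ) ^ s) ≡
        0 [ZMOD 3]) := by
  refine ⟨fun h => ?_, fun h hn => ?_, fun h hn => ?_⟩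
  · apply cast_iff
    rw [az_even r s hr hs h]
    simp
  · apply cast_iff
    rw [(az_odd r s hr hs h n).1 hn]
    simp
  · apply cast_iff
    rw [(az_odd r s hr hs h n).2 hn]
    simp
end

section
/- For every integer n ≥ 1, the central Eulerian number E_n = A(2n−1, n) satisfies: E_n ≡ 1 (mod 3) if n = m + 1 for some m ∈ T(01), and E_n ≡ 0 (mod 3) otherwise. -/
/-- The central Eulerian numbers `E n = A(2n-1, n) = ∑_i (-1)^i (n-i)^{2n-1} C(2n, i)`. -/
def centralEulerian (n : ℕ) : ℤ :=
  ∑ i ∈ Finset.range (n + 1), (-1) ^ i * ((n - i : ℕ) : ℤ) ^ (2 * n - 1) * ((2 * n).choose i)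

theorem aux_partial (N k : ℕ) :
    ∑ i ∈ Finset.range (k + 1), (-1 : ℤ) ^ i * ((N + 1).choose i : ℤ) = (-1) ^ k * (N.choose k : ℤ) := by
  induction k with
  | zero => simp
  | succ k ih =>
    rw [Finset.sum_range_succ, ih, Nat.choose_succ_succ N k]
    push_cast
    ring

theorem aux_double (N k : ℕ) :
    ∑ i ∈ Finset.range (k + 2), (-1 : ℤ) ^ i * ((k : ℤ) + 1 - i) * ((N + 2).choose i : ℤ)
      = (-1) ^ k * (N.choose k : ℤ) := by
  induction k with
  | zero => simp [Finset.sum_range_succ]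
  | succ k ih =>
    rw [Finset.sum_range_succ]
    have h : ∀ i ∈ Finset.range (k + 2),
        (-1 : ℤ) ^ i * (((k + 1 : ℕ) : ℤ) + 1 - i) * ((N + 2).choose i : ℤ) =
        (-1 : ℤ) ^ i * ((k : ℤ) + 1 - i) * ((N + 2).choose i : ℤ)
          + (-1 : ℤ) ^ i * ((N + 1 + 1).choose i : ℤ) := by
      intro i _
      push_cast
      ring
    rw [Finset.sum_congr rfl h, Finset.sum_add_distrib, ih, aux_partial (N + 1) (k + 1),
      Nat.choose_succ_succ N k]
    push_cast
    ring

theorem aux_pow (x : ℤ) (m : ℕ) : x ^ (2 * m + 1) ≡ x [ZMOD 3] := by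
  induction m with
  | zero => simp [Int.ModEq]
  | succ m ih =>
    have h3 : x ^ 3 ≡ x [ZMOD 3] := by
      have : x % 3 = 0 ∨ x % 3 = 1 ∨ x % 3 = 2 := by omega
      rcases this with h | h | h <;> simp [Int.ModEq, pow_succ, Int.mul_emod, h]
    have h := ih.mul_right (x ^ 2)
    have e1 : x ^ (2 * (m + 1) + 1) = x ^ (2 * m + 1) * x ^ 2 := by ring
    have e2 : x ^ 3 = x * x ^ 2 := by ring
    rw [e1]
    rw [e2] at h3
    exact h.trans h3

theorem aux_reduce (m : ℕ) :
    centralEulerian (m + 1) ≡ (-1) ^ m * ((2 * m).choose m : ℤ) [ZMOD 3] := by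
  rw [← aux_double (2 * m) m]
  unfold centralEulerian
  apply Int.ModEq.sum
  intro i hi
  have hi' : i ≤ m + 1 := by
    have := Finset.mem_range.mp hi
    omega
  have e : 2 * (m + 1) - 1 = 2 * m + 1 := by omega
  have e' : 2 * (m + 1) = 2 * m + 2 := by ring
  rw [e, e', Nat.cast_sub hi']
  have := aux_pow (((m + 1 : ℕ) : ℤ) - i) m
  have h := ((this.mul_left ((-1) ^ i)).mul_right ((2 * m + 2).choose i : ℤ))
  push_cast at h ⊢
  exact h

theorem aux_T01 (q r : ℕ) (hr : r < 3) : 3 * q + r ∈ T01 ↔ (r ≠ 2 ∧ q ∈ T01) := by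
  by_cases h0 : 3 * q + r = 0
  · have hq : q = 0 := by omega
    have hr : r = 0 := by omega
    subst hq hr
    simp [T01]
  · unfold T01
    simp only [Set.mem_setOf_eq]
    rw [Nat.digits_def' (by norm_num) (by omega)]
    have h1 : (3 * q + r) % 3 = r := by omega
    have h2 : (3 * q + r) / 3 = q := by omega
    rw [h1, h2]
    simp only [List.mem_cons, forall_eq_or_imp]
    have : (r = 0 ∨ r = 1) ↔ r ≠ 2 := by omega
    rw [this]

theorem aux_lucas (m : ℕ) :
    (m ∈ T01 → (-1) ^ m * ((2 * m).choose m : ℤ) ≡ 1 [ZMOD 3]) ∧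
    (m ∉ T01 → (-1) ^ m * ((2 * m).choose m : ℤ) ≡ 0 [ZMOD 3]) := by
  induction m using Nat.strong_induction_on with
  | _ m ih =>
  by_cases hm : m = 0
  · subst hm
    simp [T01]
  obtain ⟨q, r, hr, rfl⟩ : ∃ q r, r < 3 ∧ m = 3 * q + r :=
    ⟨m / 3, m % 3, Nat.mod_lt _ (by norm_num), by omega⟩
  have ihq := ih q (by omega)
  rw [aux_T01 q r hr]
  haveI : Fact (Nat.Prime 3) := ⟨Nat.prime_three⟩
  have L := Choose.choose_modEq_choose_mod_mul_choose_div (n := 2 * (3 * q + r)) (k := 3 * q + r) (p := 3)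
  have h1 : (3 * q + r) % 3 = r := by omega
  have h2 : (3 * q + r) / 3 = q := by omega
  rw [h1, h2] at L
  have sg : (-1 : ℤ) ^ (3 * q) = (-1) ^ q := by
    rw [pow_mul]; norm_num
  have L' := L.mul_left ((-1) ^ (3 * q + r))
  have key : r ≠ 2 → (-1) ^ (3 * q + r) * ((2 * (3 * q + r)).choose (3 * q + r) : ℤ) ≡
      (-1) ^ q * ((2 * q).choose q : ℤ) [ZMOD 3] := by
    intro hr2
    refine L'.trans ?_
    have h3 : 2 * (3 * q + r) % 3 = 2 * r := by omega
    have h4 : 2 * (3 * q + r) / 3 = 2 * q := by omega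
    rw [h3, h4, pow_add, sg]
    obtain rfl | rfl : r = 0 ∨ r = 1 := by omega
    · simp [Int.ModEq]
    · rw [Int.modEq_iff_dvd]
      refine ⟨(-1) ^ q * ((2 * q).choose q : ℤ), ?_⟩
      simp
      ring
  by_cases hr2 : r = 2
  · subst hr2
    refine ⟨fun h => absurd rfl h.1, fun _ => L'.trans ?_⟩
    have h3 : 2 * (3 * q + 2) % 3 = 1 := by omega
    rw [h3]
    simp [Int.ModEq]
  · refine ⟨fun h => (key hr2).trans (ihq.1 h.2), fun h => (key hr2).trans (ihq.2 ?_)⟩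
    exact fun hq => h ⟨hr2, hq⟩

/-- Central Eulerian numbers mod 3: for `n ≥ 1`, `E n ≡ 1 (mod 3)` if `n = m + 1`
for some `m ∈ T(01)`, and `E n ≡ 0 (mod 3)` otherwise. -/
theorem centralEulerian_mod_three (n : ℕ) (hn : 1 ≤ n) :
    ((∃ m ∈ T01, n = m + 1) → centralEulerian n ≡ 1 [ZMOD 3]) ∧
    (¬ (∃ m ∈ T01, n = m + 1) → centralEulerian n ≡ 0 [ZMOD 3]) := by
  constructor
  · rintro ⟨m, hm, rfl⟩
    exact (aux_reduce m).trans ((aux_lucas m).1 hm)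
  · intro h
    obtain ⟨m, rfl⟩ : ∃ m, n = m + 1 := ⟨n - 1, by omega⟩
    exact (aux_reduce m).trans ((aux_lucas m).2 fun hm => h ⟨m, hm, rfl⟩)
end
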